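/- arXiv:1804.10821 — 3 statements merged into one kernel-verified Lean document; each statement's English description precedes it below -/
import Mathlib

section
/- Let 0 < r ≤ 1, let Λ be a nonempty index set, q ∈ ℕ, and let {X_𝐧(λ) : 𝐧 ∈ ℕ^q, λ ∈ Λ} and {Y_𝐧(λ) : 𝐧 ∈ ℕ^q, λ ∈ Λ} be real-valued random fields of stochastic processes on a common probability space satisfying the strict marginal stationarity condition (X_𝐧(λ), Y_𝐧(λ)) equals (X_𝐧(λ'), Y_𝐧(λ')) in distribution for all λ, λ' ∈ Λ and all 𝐧. Suppose that for each λ ∈ Λ the families {|X_𝐧(λ)|^r : 𝐧} and {|Y_𝐧(λ)|^r : 𝐧} are uniformly integrable, that for each 𝐧 the map ω ↦ sup_{λ∈Λ} |X_𝐧(λ)(ω) − Y_𝐧(λ)(ω)| is a (finite-valued) random variable, and that sup_{λ∈Λ} |X_𝐧(λ) − Y_𝐧(λ)| → 0 in probability as 𝐧 → ∞. Then sup_{λ∈Λ} E|X_𝐧(λ) − Y_𝐧(λ)|^r → 0 as 𝐧 → ∞. -/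
open MeasureTheory ProbabilityTheory Filter

/-- For random fields of stochastic processes `X_𝐧(λ)`, `Y_𝐧(λ)` satisfying
strict marginal stationarity, with `{|X_𝐧(λ)|^r}` and `{|Y_𝐧(λ)|^r}` uniformly integrable
for each `λ`, a measurable finite-valued sup, and
`sup_λ |X_𝐧(λ) − Y_𝐧(λ)| → 0` in probability, we have
`sup_λ E|X_𝐧(λ) − Y_𝐧(λ)|^r → 0` as `𝐧 → ∞`, for `0 < r ≤ 1`. -/
theorem field_moment_convergence_diff
    {Ω : Type*} [MeasurableSpace Ω] (P : Measure Ω) [IsProbabilityMeasure P]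
    {Λ : Type*} [Nonempty Λ] (q : ℕ)
    (r : ℝ) (hr0 : 0 < r) (hr1 : r ≤ 1)
    (X Y : (Fin q → ℕ) → Λ → Ω → ℝ)
    (hXm : ∀ n l, Measurable (X n l)) (hYm : ∀ n l, Measurable (Y n l))
    (hstat : ∀ (n : Fin q → ℕ) (l l' : Λ),
      IdentDistrib (fun ω => (X n l ω, Y n l ω)) (fun ω => (X n l' ω, Y n l' ω)) P P)
    (hXui : ∀ l, UniformIntegrable (fun n ω => |X n l ω| ^ r) 1 P)
    (hYui : ∀ l, UniformIntegrable (fun n ω => |Y n l ω| ^ r) 1 P)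
    (hbdd : ∀ (n : Fin q → ℕ) (ω : Ω), BddAbove (Set.range fun l => |X n l ω - Y n l ω|))
    (hsm : ∀ n : Fin q → ℕ, Measurable fun ω => ⨆ l, |X n l ω - Y n l ω|)
    (hconv : TendstoInMeasure P (fun n ω => ⨆ l, |X n l ω - Y n l ω|) atTop 0) :
    Tendsto (fun n : Fin q → ℕ => ⨆ l, ∫ ω, |X n l ω - Y n l ω| ^ r ∂P)
      atTop (nhds 0) := by
  obtain ⟨l₀⟩ := ‹Nonempty Λ›
  have hZm : ∀ n, Measurable (fun ω => |X n l₀ ω - Y n l₀ ω| ^ r) := fun n =>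
    (((hXm n l₀).sub (hYm n l₀)).abs).pow_const r
  have hsup : ∀ n, (⨆ l, ∫ ω, |X n l ω - Y n l ω| ^ r ∂P)
      = ∫ ω, |X n l₀ ω - Y n l₀ ω| ^ r ∂P := by
    intro n
    have h : ∀ l, ∫ ω, |X n l ω - Y n l ω| ^ r ∂P = ∫ ω, |X n l₀ ω - Y n l₀ ω| ^ r ∂P := by
      intro l
      have hg : Measurable (fun p : ℝ × ℝ => |p.1 - p.2| ^ r) :=
        ((measurable_fst.sub measurable_snd).abs).pow_const r
      exact ((hstat n l l₀).comp hg).integral_eq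
    have : Nonempty Λ := ⟨l₀⟩
    simp only [h, ciSup_const]
  simp only [hsup]
  have hle : ∀ n ω, ‖|X n l₀ ω - Y n l₀ ω| ^ r‖ ≤ ‖|X n l₀ ω| ^ r + |Y n l₀ ω| ^ r‖ := by
    intro n ω
    rw [Real.norm_of_nonneg (by positivity), Real.norm_of_nonneg (by positivity)]
    exact (Real.rpow_le_rpow (abs_nonneg _) (abs_sub _ _) hr0.le).trans
      (Real.rpow_add_le_add_rpow (abs_nonneg _) (abs_nonneg _) hr0.le hr1)
  have hsum := (hXui l₀).2.1.add (hYui l₀).2.1 le_rfl (hXui l₀).1 (hYui l₀).1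
  have hui : UnifIntegrable (fun n ω => |X n l₀ ω - Y n l₀ ω| ^ r) 1 P := by
    intro ε hε
    obtain ⟨δ, hδ, h⟩ := hsum hε
    refine ⟨δ, hδ, fun n s hs hμ => (eLpNorm_mono fun ω => ?_).trans (h n s hs hμ)⟩
    rw [norm_indicator_eq_indicator_norm, norm_indicator_eq_indicator_norm]
    exact Set.indicator_le_indicator (hle n ω)
  have hmeas : TendstoInMeasure P (fun n ω => |X n l₀ ω - Y n l₀ ω| ^ r) atTop 0 := by
    refine tendstoInMeasure_of_ne_top fun ε hε hε' => ?_
    have hpos : 0 < ε ^ r⁻¹ := ENNReal.rpow_pos hε hε'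
    refine tendsto_of_tendsto_of_tendsto_of_le_of_le tendsto_const_nhds (hconv _ hpos)
      (fun _ => zero_le) fun n => measure_mono fun ω hω => ?_
    simp only [Set.mem_ofPred_eq, Pi.zero_apply, edist_zero_right] at hω ⊢
    rw [Real.enorm_rpow_of_nonneg (abs_nonneg _) hr0.le] at hω
    have h2 : ‖|X n l₀ ω - Y n l₀ ω|‖ₑ ≤ ‖⨆ l, |X n l ω - Y n l ω|‖ₑ := by
      have h3 : |X n l₀ ω - Y n l₀ ω| ≤ ⨆ l, |X n l ω - Y n l ω| := le_ciSup (hbdd n ω) l₀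
      rw [enorm_le_iff_norm_le, Real.norm_of_nonneg (abs_nonneg _),
        Real.norm_of_nonneg ((abs_nonneg _).trans h3)]
      exact h3
    refine le_trans ?_ h2
    rwa [ENNReal.rpow_inv_le_iff hr0]
  have hint : ∀ n, Integrable (fun ω => |X n l₀ ω - Y n l₀ ω| ^ r) P := fun n =>
    (((hXui l₀).memLp n).integrable le_rfl |>.add
      (((hYui l₀).memLp n).integrable le_rfl)).mono (hZm n).aestronglyMeasurable
      (Eventually.of_forall (hle n))
  refine tendsto_of_seq_tendsto fun u hu => ?_
  have hL := tendsto_Lp_finite_of_tendstoInMeasure (μ := P) (p := 1)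
    (f := fun k ω => |X (u k) l₀ ω - Y (u k) l₀ ω| ^ r) (g := 0) le_rfl ENNReal.one_ne_top
    (fun k => (hZm (u k)).aestronglyMeasurable) MemLp.zero
    (fun ε hε => let ⟨δ, hδ, h⟩ := hui hε; ⟨δ, hδ, fun k => h (u k)⟩)
    (fun ε hε => (hmeas ε hε).comp hu)
  have := tendsto_integral_of_L1' (μ := P) (0 : Ω → ℝ) aestronglyMeasurable_zero
    (Eventually.of_forall fun k => hint (u k)) hL
  simpa [Function.comp_def] using this
end

section
/- Let 0 < r ≤ 1, let Λ be a nonempty index set, q ∈ ℕ, and let {X_𝐧(λ) : 𝐧 ∈ ℕ^q, λ ∈ Λ} and {Y_𝐧(λ) : 𝐧 ∈ ℕ^q, λ ∈ Λ} be real-valued random fields of stochastic processes on a common probability space satisfying the strict marginal stationarity condition (X_𝐧(λ), Y_𝐧(λ)) equals (X_𝐧(λ'), Y_𝐧(λ')) in distribution for all λ, λ' ∈ Λ and all 𝐧. Suppose that for each λ ∈ Λ the families {|X_𝐧(λ)|^r : 𝐧} and {|Y_𝐧(λ)|^r : 𝐧} are uniformly integrable, that for each 𝐧 the map ω ↦ sup_{λ∈Λ}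 |X_𝐧(λ)(ω) − Y_𝐧(λ)(ω)| is a (finite-valued) random variable, and that sup_{λ∈Λ} |X_𝐧(λ) − Y_𝐧(λ)| → 0 in probability as 𝐧 → ∞. Then sup_{λ∈Λ} |E|X_𝐧(λ)|^r − E|Y_𝐧(λ)|^r| → 0 as 𝐧 → ∞. -/
open MeasureTheory ProbabilityTheory Filter

theorem aux_abs_rpow_sub {r : ℝ} (hr0 : 0 < r) (hr1 : r ≤ 1) (x y : ℝ) :
    |(|x| ^ r - |y| ^ r)| ≤ |x - y| ^ r := by
  have key : ∀ a b : ℝ, |a| ^ r ≤ |b| ^ r + |a - b| ^ r := fun a b => by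
    have h1 : |a| ≤ |b| + |a - b| := by
      have := abs_add_le b (a - b)
      simpa using this
    exact (Real.rpow_le_rpow (abs_nonneg _) h1 hr0.le).trans
      (Real.rpow_add_le_add_rpow (abs_nonneg _) (abs_nonneg _) hr0.le hr1)
  have h1 := key x y
  have h2 := key y x
  rw [abs_sub_comm y x] at h2
  rw [abs_le]
  constructor <;> linarith

/-- Under strict marginal stationarity, uniform integrability of
`{|X_𝐧(λ)|^r}` and `{|Y_𝐧(λ)|^r}` for each `λ`, measurability of the sup, and
`sup_λ |X_𝐧(λ) − Y_𝐧(λ)| → 0` in probability,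
`sup_λ |E|X_𝐧(λ)|^r − E|Y_𝐧(λ)|^r| → 0` as `𝐧 → ∞`, for `0 < r ≤ 1`. -/
theorem field_moment_convergence_abs_moments
    {Ω : Type*} [MeasurableSpace Ω] (P : Measure Ω) [IsProbabilityMeasure P]
    {Λ : Type*} [Nonempty Λ] (q : ℕ)
    (r : ℝ) (hr0 : 0 < r) (hr1 : r ≤ 1)
    (X Y : (Fin q → ℕ) → Λ → Ω → ℝ)
    (hXm : ∀ n l, Measurable (X n l)) (hYm : ∀ n l, Measurable (Y n l))
    (hstat : ∀ (n : Fin q → ℕ) (l l' : Λ),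
      IdentDistrib (fun ω => (X n l ω, Y n l ω)) (fun ω => (X n l' ω, Y n l' ω)) P P)
    (hXui : ∀ l, UniformIntegrable (fun n ω => |X n l ω| ^ r) 1 P)
    (hYui : ∀ l, UniformIntegrable (fun n ω => |Y n l ω| ^ r) 1 P)
    (hbdd : ∀ (n : Fin q → ℕ) (ω : Ω), BddAbove (Set.range fun l => |X n l ω - Y n l ω|))
    (hsm : ∀ n : Fin q → ℕ, Measurable fun ω => ⨆ l, |X n l ω - Y n l ω|)
    (hconv : TendstoInMeasure P (fun n ω => ⨆ l, |X n l ω - Y n l ω|) atTop 0) :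
    Tendsto (fun n : Fin q → ℕ =>
        ⨆ l, |(∫ ω, |X n l ω| ^ r ∂P) - ∫ ω, |Y n l ω| ^ r ∂P|)
      atTop (nhds 0) := by
  obtain ⟨l₀⟩ := ‹Nonempty Λ›
  have : Nonempty Λ := ⟨l₀⟩
  have hmeas : Measurable (fun x : ℝ => |x| ^ r) := by fun_prop
  have hconst : ∀ n l, |(∫ ω, |X n l ω| ^ r ∂P) - ∫ ω, |Y n l ω| ^ r ∂P|
      = |(∫ ω, |X n l₀ ω| ^ r ∂P) - ∫ ω, |Y n l₀ ω| ^ r ∂P| := by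
    intro n l
    have h1 := ((hstat n l l₀).comp (hmeas.comp measurable_fst)).integral_eq
    have h2 := ((hstat n l l₀).comp (hmeas.comp measurable_snd)).integral_eq
    simp only [Function.comp_def] at h1 h2
    rw [h1, h2]
  simp_rw [hconst, ciSup_const]
  refine tendsto_of_seq_tendsto fun u hu => ?_
  set F : ℕ → Ω → ℝ := (fun k ω => |X (u k) l₀ ω| ^ r) - (fun k ω => |Y (u k) l₀ ω| ^ r) with hF
  have hXi : ∀ n, Integrable (fun ω => |X n l₀ ω| ^ r) P := fun n =>
    memLp_one_iff_integrable.1 ((hXui l₀).memLp n)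
  have hYi : ∀ n, Integrable (fun ω => |Y n l₀ ω| ^ r) P := fun n =>
    memLp_one_iff_integrable.1 ((hYui l₀).memLp n)
  have hFi : ∀ k, Integrable (F k) P := fun k => (hXi (u k)).sub (hYi (u k))
  have hX' : UnifIntegrable (fun k ω => |X (u k) l₀ ω| ^ r) 1 P := by
    intro ε hε
    obtain ⟨δ, hδ, h⟩ := (hXui l₀).unifIntegrable hε
    exact ⟨δ, hδ, fun i => h (u i)⟩
  have hY' : UnifIntegrable (fun k ω => |Y (u k) l₀ ω| ^ r) 1 P := by
    intro ε hε
    obtain ⟨δ, hδ, h⟩ := (hYui l₀).unifIntegrable hε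
    exact ⟨δ, hδ, fun i => h (u i)⟩
  have hFui : UnifIntegrable F 1 P := hX'.sub hY' le_rfl
    (fun k => (hXi (u k)).aestronglyMeasurable) (fun k => (hYi (u k)).aestronglyMeasurable)
  have hFm : TendstoInMeasure P F atTop (fun _ => (0 : ℝ)) := by
    rw [tendstoInMeasure_iff_norm] at hconv ⊢
    intro ε hε
    have h := (hconv (ε ^ (1 / r)) (by positivity)).comp hu
    refine tendsto_of_tendsto_of_tendsto_of_le_of_le tendsto_const_nhds h
      (fun _ => zero_le) (fun k => measure_mono fun ω hω => ?_)
    simp only [Set.mem_setOf_eq, sub_zero, Pi.zero_apply, Real.norm_eq_abs] at hω ⊢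
    have h1 : ε ≤ |X (u k) l₀ ω - Y (u k) l₀ ω| ^ r :=
      hω.trans (aux_abs_rpow_sub hr0 hr1 _ _)
    have h2 : ε ^ (1 / r) ≤ |X (u k) l₀ ω - Y (u k) l₀ ω| := by
      have := Real.rpow_le_rpow hε.le h1 (by positivity : 0 ≤ 1 / r)
      rwa [← Real.rpow_mul (abs_nonneg _), mul_one_div_cancel hr0.ne', Real.rpow_one] at this
    exact h2.trans ((le_ciSup (hbdd (u k) ω) l₀).trans (le_abs_self _))
  have hL := tendsto_Lp_finite_of_tendstoInMeasure le_rfl ENNReal.one_ne_top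
    (fun k => (hFi k).aestronglyMeasurable) (MemLp.zero' : MemLp (fun _ => (0 : ℝ)) 1 P) hFui hFm
  have hI := tendsto_integral_of_L1' (fun _ => (0 : ℝ)) aestronglyMeasurable_const
    (Eventually.of_forall hFi) hL
  have := hI.abs
  simp only [integral_zero, abs_zero] at this
  refine this.congr fun k => ?_
  simp only [Function.comp_def]
  rw [← integral_sub (hXi (u k)) (hYi (u k))]
  rfl
end

section
/- Let 0 < r < ∞, let Λ be a nonempty index set, q ∈ ℕ, and let {X_𝐧(λ) : 𝐧 ∈ ℕ^q, λ ∈ Λ} and {Y_𝐧(λ) : 𝐧 ∈ ℕ^q, λ ∈ Λ} be real-valued random fields of stochastic processes on a common probability space satisfying the strict marginal stationarity condition (X_𝐧(λ), Y_𝐧(λ)) equals (X_𝐧(λ'), Y_𝐧(λ')) in distribution for all λ, λ' ∈ Λ and all 𝐧. Suppose that for each λ ∈ Λ the families {|X_𝐧(λ)|^r : 𝐧} and {|Y_𝐧(λ)|^r : 𝐧} are uniformly integrable, that for each 𝐧 the map ω ↦ sup_{λ∈Λ} |X_𝐧(λ)(ω) − Y_𝐧(λ)(ω)| is a (finite-valued)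 random variable, and that sup_{λ∈Λ} |X_𝐧(λ) − Y_𝐧(λ)| → 0 in probability as 𝐧 → ∞. Then sup_{λ∈Λ} |(E|X_𝐧(λ)|^r)^{1/r} − (E|Y_𝐧(λ)|^r)^{1/r}| → 0 as 𝐧 → ∞. -/
open MeasureTheory ProbabilityTheory Filter

lemma aux_int {Ω ι : Type*} [MeasurableSpace Ω] (P : Measure Ω) [IsProbabilityMeasure P]
    (F : Filter ι) (r : ℝ) (hr0 : 0 < r) (X Y : ι → Ω → ℝ)
    (hXm : ∀ n, Measurable (X n)) (hYm : ∀ n, Measurable (Y n))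
    (hXui : UniformIntegrable (fun n ω => |X n ω| ^ r) 1 P)
    (hYui : UniformIntegrable (fun n ω => |Y n ω| ^ r) 1 P)
    (hconv : ∀ d : ℝ, 0 < d → Tendsto (fun n => P {ω | d ≤ |X n ω - Y n ω|}) F (nhds 0))
    (ε : ℝ) (hε : 0 < ε) :
    ∀ᶠ n in F, |(∫ ω, |X n ω| ^ r ∂P) - (∫ ω, |Y n ω| ^ r ∂P)| < ε := by
  obtain ⟨hX1, hX2, C, hC⟩ := hXui
  obtain ⟨hY1, hY2, D, hD⟩ := hYui
  have hXi : ∀ n, Integrable (fun ω => |X n ω| ^ r) P := fun n =>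
    memLp_one_iff_integrable.1 ⟨hX1 n, (hC n).trans_lt ENNReal.coe_lt_top⟩
  have hYi : ∀ n, Integrable (fun ω => |Y n ω| ^ r) P := fun n =>
    memLp_one_iff_integrable.1 ⟨hY1 n, (hD n).trans_lt ENNReal.coe_lt_top⟩
  have hui := hX2.sub hY2 le_rfl hX1 hY1
  obtain ⟨δ, hδ, hs⟩ := hui (show 0 < ε / 3 by linarith)
  -- tightness
  have tight : ∀ (Z : ι → Ω → ℝ) (C : NNReal) (K : ℝ), 0 < K → 3 * C / δ ≤ K →
      (∀ n, Measurable (Z n)) →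
      (∀ n, eLpNorm (fun ω => |Z n ω| ^ r) 1 P ≤ C) →
      ∀ n, P {ω | K ≤ |Z n ω| ^ r} ≤ ENNReal.ofReal (δ / 3) := by
    intro Z C K hK hCK hZ hZC n
    have hsub : {ω | K ≤ |Z n ω| ^ r} ⊆ {ω | ENNReal.ofReal K ≤ ‖|Z n ω| ^ r‖ₑ} := by
      intro ω hω
      simp only [Set.mem_setOf_eq] at hω ⊢
      rw [← ofReal_norm_eq_enorm]
      exact ENNReal.ofReal_le_ofReal (hω.trans (le_abs_self _))
    have hm : AEMeasurable (fun ω => ‖|Z n ω| ^ r‖ₑ) P := by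
      have := hZ n
      fun_prop
    have h1 := mul_meas_ge_le_lintegral₀ hm (ENNReal.ofReal K)
    have h2 := hZC n
    rw [eLpNorm_one_eq_lintegral_enorm] at h2
    have h3 : ENNReal.ofReal K * P {ω | K ≤ |Z n ω| ^ r} ≤ C :=
      (mul_le_mul_right (measure_mono hsub) _).trans (h1.trans h2)
    have h4 : (C : ENNReal) ≤ ENNReal.ofReal K * ENNReal.ofReal (δ / 3) := by
      rw [← ENNReal.ofReal_mul hK.le, ← ENNReal.ofReal_coe_nnreal]
      apply ENNReal.ofReal_le_ofReal
      rw [div_le_iff₀ hδ] at hCK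
      linarith
    have h5 := h3.trans h4
    rwa [ENNReal.mul_le_mul_iff_right (by simpa using hK) ENNReal.ofReal_ne_top] at h5
  set K : ℝ := 3 * C / δ + 3 * D / δ + 1 with hKdef
  have hC0 : 0 ≤ 3 * (C : ℝ) / δ := by positivity
  have hD0 : 0 ≤ 3 * (D : ℝ) / δ := by positivity
  have hK : 0 < K := by positivity
  have tX := tight X C K hK (by linarith) hXm hC
  have tY := tight Y D K hK (by linarith) hYm hD
  -- uniform continuity
  have hcont : Continuous (fun t : ℝ => |t| ^ r) :=
    continuous_abs.rpow_const (fun _ => Or.inr hr0.le)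
  have huc := (isCompact_Icc (a := -(K ^ (1 / r))) (b := K ^ (1 / r))).uniformContinuousOn_of_continuous
    hcont.continuousOn
  rw [Metric.uniformContinuousOn_iff] at huc
  obtain ⟨d, hd, hdd⟩ := huc (ε / 3) (by linarith)
  have hmem : ∀ t : ℝ, |t| ^ r < K → t ∈ Set.Icc (-(K ^ (1 / r))) (K ^ (1 / r)) := by
    intro t ht
    have h1 : |t| = (|t| ^ r) ^ (1 / r) := by
      rw [← Real.rpow_mul (abs_nonneg t), mul_one_div_cancel hr0.ne', Real.rpow_one]
    have h2 : |t| ≤ K ^ (1 / r) := by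
      rw [h1]
      exact Real.rpow_le_rpow (by positivity) ht.le (by positivity)
    exact abs_le.1 h2
  have hev := (hconv d hd).eventually (Iic_mem_nhds
    (ENNReal.ofReal_pos.2 (show 0 < δ / 3 by linarith)))
  filter_upwards [hev] with n hn
  set B : Set Ω := {ω | d ≤ |X n ω - Y n ω|} ∪ {ω | K ≤ |X n ω| ^ r} ∪ {ω | K ≤ |Y n ω| ^ r} with hB
  have hXn := hXm n
  have hYn := hYm n
  have hBm : MeasurableSet B := by
    refine ((measurableSet_le measurable_const ?_).union (measurableSet_le measurable_const ?_)).union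
      (measurableSet_le measurable_const ?_) <;> fun_prop
  have hPB : P B ≤ ENNReal.ofReal δ := by
    have : ENNReal.ofReal δ = ENNReal.ofReal (δ / 3) + ENNReal.ofReal (δ / 3) + ENNReal.ofReal (δ / 3) := by
      rw [← ENNReal.ofReal_add (by positivity) (by positivity),
        ← ENNReal.ofReal_add (by positivity) (by positivity)]
      congr 1; ring
    rw [this]
    exact (measure_union_le _ _).trans
      (add_le_add ((measure_union_le _ _).trans (add_le_add hn (tX n))) (tY n))
  have hb := hs n B hBm hPB
  set W : Ω → ℝ := fun ω => |X n ω| ^ r - |Y n ω| ^ r with hW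
  have hWi : Integrable W P := (hXi n).sub (hYi n)
  have e1 : (∫ ω, |X n ω| ^ r ∂P) - (∫ ω, |Y n ω| ^ r ∂P) = ∫ ω, W ω ∂P :=
    (integral_sub (hXi n) (hYi n)).symm
  have hb' : |∫ ω in B, W ω ∂P| ≤ ε / 3 := by
    have h1 : ‖∫ ω in B, W ω ∂P‖ₑ ≤ ENNReal.ofReal (ε / 3) := by
      refine le_trans (enorm_integral_le_lintegral_enorm _) (le_trans (le_of_eq ?_) hb)
      rw [eLpNorm_indicator_eq_eLpNorm_restrict hBm, eLpNorm_one_eq_lintegral_enorm]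
      rfl
    rw [← ofReal_norm_eq_enorm] at h1
    exact (ENNReal.ofReal_le_ofReal_iff (by linarith)).1 h1
  have hg : |∫ ω in Bᶜ, W ω ∂P| ≤ ε / 3 := by
    have h1 : ‖∫ ω in Bᶜ, W ω ∂P‖ ≤ ε / 3 * P.real Bᶜ := by
      refine norm_setIntegral_le_of_norm_le_const (measure_lt_top _ _) ?_
      intro ω hω
      simp only [hB, Set.mem_compl_iff, Set.mem_union, Set.mem_setOf_eq, not_or, not_le] at hω
      exact (hdd _ (hmem _ hω.1.2) _ (hmem _ hω.2) hω.1.1).le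
    have h2 : P.real Bᶜ ≤ 1 := measureReal_le_one
    rw [Real.norm_eq_abs] at h1
    nlinarith
  rw [e1, ← integral_add_compl hBm hWi]
  have := abs_add_le (∫ ω in B, W ω ∂P) (∫ ω in Bᶜ, W ω ∂P)
  linarith

/-- Under strict marginal stationarity, uniform integrability of
`{|X_𝐧(λ)|^r}` and `{|Y_𝐧(λ)|^r}` for each `λ`, measurability of the sup, and
`sup_λ |X_𝐧(λ) − Y_𝐧(λ)| → 0` in probability,
`sup_λ |(E|X_𝐧(λ)|^r)^{1/r} − (E|Y_𝐧(λ)|^r)^{1/r}| → 0` as `𝐧 → ∞`, for `0 < r < ∞`. -/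
theorem field_Lr_norm_convergence
    {Ω : Type*} [MeasurableSpace Ω] (P : Measure Ω) [IsProbabilityMeasure P]
    {Λ : Type*} [Nonempty Λ] (q : ℕ)
    (r : ℝ) (hr0 : 0 < r)
    (X Y : (Fin q → ℕ) → Λ → Ω → ℝ)
    (hXm : ∀ n l, Measurable (X n l)) (hYm : ∀ n l, Measurable (Y n l))
    (hstat : ∀ (n : Fin q → ℕ) (l l' : Λ),
      IdentDistrib (fun ω => (X n l ω, Y n l ω)) (fun ω => (X n l' ω, Y n l' ω)) P P)
    (hXui : ∀ l, UniformIntegrable (fun n ω => |X n l ω| ^ r) 1 P)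
    (hYui : ∀ l, UniformIntegrable (fun n ω => |Y n l ω| ^ r) 1 P)
    (hbdd : ∀ (n : Fin q → ℕ) (ω : Ω), BddAbove (Set.range fun l => |X n l ω - Y n l ω|))
    (hsm : ∀ n : Fin q → ℕ, Measurable fun ω => ⨆ l, |X n l ω - Y n l ω|)
    (hconv : TendstoInMeasure P (fun n ω => ⨆ l, |X n l ω - Y n l ω|) atTop 0) :
    Tendsto (fun n : Fin q → ℕ =>
        ⨆ l, |(∫ ω, |X n l ω| ^ r ∂P) ^ (1 / r) - (∫ ω, |Y n l ω| ^ r ∂P) ^ (1 / r)|)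
      atTop (nhds 0) := by
  obtain ⟨l0⟩ := ‹Nonempty Λ›
  have hne : Nonempty Λ := ⟨l0⟩
  have hXe : ∀ n l, ∫ ω, |X n l ω| ^ r ∂P = ∫ ω, |X n l0 ω| ^ r ∂P := fun n l =>
    ((hstat n l l0).comp (u := fun p : ℝ × ℝ => |p.1| ^ r) (by fun_prop)).integral_eq
  have hYe : ∀ n l, ∫ ω, |Y n l ω| ^ r ∂P = ∫ ω, |Y n l0 ω| ^ r ∂P := fun n l =>
    ((hstat n l l0).comp (u := fun p : ℝ × ℝ => |p.2| ^ r) (by fun_prop)).integral_eq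
  simp only [hXe, hYe, ciSup_const]
  have hc : ∀ d : ℝ, 0 < d →
      Tendsto (fun n => P {ω | d ≤ |X n l0 ω - Y n l0 ω|}) atTop (nhds 0) := by
    intro d hd
    refine tendsto_of_tendsto_of_tendsto_of_le_of_le tendsto_const_nhds
      (tendstoInMeasure_iff_norm.1 hconv d hd) (fun _ => zero_le) ?_
    intro n
    refine measure_mono ?_
    intro ω hω
    simp only [Set.mem_setOf_eq, Pi.zero_apply, sub_zero, Real.norm_eq_abs] at hω ⊢
    exact (hω.trans (le_ciSup (hbdd n ω) l0)).trans (le_abs_self _)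
  have key := aux_int P atTop r hr0 (fun n => X n l0) (fun n => Y n l0) (fun n => hXm n l0)
    (fun n => hYm n l0) (hXui l0) (hYui l0) hc
  have bd : ∀ Z : (Fin q → ℕ) → Ω → ℝ, UniformIntegrable (fun n ω => |Z n ω| ^ r) 1 P →
      ∃ C : ℝ, ∀ n, ∫ ω, |Z n ω| ^ r ∂P ∈ Set.Icc 0 C := by
    rintro Z ⟨h1, h2, C, hC⟩
    refine ⟨C, fun n => ⟨integral_nonneg fun ω => by positivity, ?_⟩⟩
    have h3 := enorm_integral_le_lintegral_enorm (μ := P) (fun ω => |Z n ω| ^ r)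
    rw [← eLpNorm_one_eq_lintegral_enorm, ← ofReal_norm_eq_enorm] at h3
    have h4 := h3.trans (hC n)
    rw [← ENNReal.ofReal_coe_nnreal] at h4
    exact (le_abs_self _).trans ((ENNReal.ofReal_le_ofReal_iff C.2).1 h4)
  obtain ⟨C, hC⟩ := bd _ (hXui l0)
  obtain ⟨D, hD⟩ := bd _ (hYui l0)
  have huc := (isCompact_Icc (a := (0 : ℝ)) (b := max C D)).uniformContinuousOn_of_continuous
    (f := fun t : ℝ => t ^ (1 / r))
    (Real.continuous_rpow_const (by positivity)).continuousOn
  rw [Metric.uniformContinuousOn_iff] at huc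
  rw [Metric.tendsto_nhds]
  intro ε hε
  obtain ⟨d, hd, hdd⟩ := huc ε hε
  filter_upwards [key d hd] with n hn
  have := hdd _ ⟨(hC n).1, (hC n).2.trans (le_max_left _ _)⟩ _
    ⟨(hD n).1, (hD n).2.trans (le_max_right _ _)⟩ hn
  rw [Real.dist_eq] at this
  rw [Real.dist_eq, sub_zero, abs_abs]
  exact this
end
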